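/- For every Lusztig datum a ∈ ℬ and every 1 ≤ i ≤ n with ε_i^*(a) > 0: M_K(ẽ_i^* a) = M_K(a) for every K ∈ M_n^× with i ∈ K or i+1 ∉ K, and M_{[i+1,n+1]}(ẽ_i^* a) = M_{[i+1,n+1]}(a) + 1. (Hence Ψ intertwines ẽ_i^* on ℬ with the raising Kashiwara operator on e-BZ data.) -/

import Mathlib

/-- The set of Lusztig data: `a : Π → ℤ_{≥0}`, modeled as an integer-valued function on
`ℤ × ℤ` that is nonnegative everywhere and vanishes off `Π = {(k,l) : 1 ≤ k < l ≤ n+1}`. -/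
def IsLusztig (n : ℕ) (a : ℤ → ℤ → ℤ) : Prop :=
  (∀ k l : ℤ, 0 ≤ a k l) ∧ ∀ k l : ℤ, ¬(1 ≤ k ∧ k < l ∧ l ≤ (n : ℤ) + 1) → a k l = 0

/-- The `p`-th smallest element (1-indexed) `k_p` of a Maya diagram `K`. -/
def kth (K : Finset ℕ) (p : ℕ) : ℕ := (K.sort (· ≤ ·)).getD (p - 1) 0

/-- `C = (c_{p,q})_{1 ≤ p ≤ q ≤ l}` (with `l = |K|`) is a `K`-tableau: an upper-triangular
integer matrix with `c_{p,p} = k_p`, `c_{p,q} ≤ c_{p,q+1}` and `c_{p,q} < c_{p+1,q}`. -/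
def IsKTab (K : Finset ℕ) (c : ℕ → ℕ → ℤ) : Prop :=
  (∀ p : ℕ, 1 ≤ p → p ≤ K.card → c p p = (kth K p : ℤ)) ∧
  (∀ p q : ℕ, 1 ≤ p → p ≤ q → q + 1 ≤ K.card → c p q ≤ c p (q + 1)) ∧
  (∀ p q : ℕ, 1 ≤ p → p + 1 ≤ q → q ≤ K.card → c p q < c (p + 1) q)

/-- `Σ_{1 ≤ p < q ≤ l} a_{c_{p,q}, c_{p,q}+(q−p)}`. -/
def tabSum (a : ℤ → ℤ → ℤ) (K : Finset ℕ) (c : ℕ → ℕ → ℤ) : ℤ :=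
  ∑ p ∈ Finset.Icc 1 K.card, ∑ q ∈ Finset.Icc (p + 1) K.card,
    a (c p q) (c p q + ((q : ℤ) - (p : ℤ)))

/-- `M_K(a) = −Σ_{j=1}^{l} Σ_{i=1}^{k_j−1} a_{i,k_j} + min{ tabSum over K-tableaux }`,
for `K ∈ M_n^×`, with the conventions `M_∅(a) = M_{[1,n+1]}(a) = 0`. -/
noncomputable def MK (n : ℕ) (a : ℤ → ℤ → ℤ) (K : Finset ℕ) : ℤ :=
  if K = ∅ ∨ K = Finset.Icc 1 (n + 1) then 0
  else
    -(∑ k ∈ K, ∑ s ∈ Finset.Icc 1 (k - 1), a (s : ℤ) (k : ℤ)) +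
      sInf {z : ℤ | ∃ c : ℕ → ℕ → ℤ, IsKTab K c ∧ z = tabSum a K c}
/-- `A_l^{*(i)}(a) = Σ_{t=l+1}^{n+1} (a_{i,t} − a_{i+1,t+1})`. -/
def Astar (n : ℕ) (a : ℤ → ℤ → ℤ) (i l : ℕ) : ℤ :=
  ∑ t ∈ Finset.Icc (l + 1) (n + 1), (a (i : ℤ) (t : ℤ) - a ((i : ℤ) + 1) ((t : ℤ) + 1))

/-- `ε_i^*(a) = max{A_i^{*(i)}(a),…,A_n^{*(i)}(a)}`. -/
def epsStar (n : ℕ) (a : ℤ → ℤ → ℤ) (i : ℕ) : ℤ :=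
  ((Finset.Icc i n).image (Astar n a i)).max.unbotD 0

/-- `l_f(a,i)`: the minimal `l ∈ [i,n]` with `A_l^{*(i)}(a) = ε_i^*(a)`. -/
def lfStar (n : ℕ) (a : ℤ → ℤ → ℤ) (i : ℕ) : ℕ :=
  (((Finset.Icc i n).filter fun l => Astar n a i l = epsStar n a i).min).untopD 0

/-- `l_e(a,i)`: the maximal `l ∈ [i,n]` with `A_l^{*(i)}(a) = ε_i^*(a)`. -/
def leStar (n : ℕ) (a : ℤ → ℤ → ℤ) (i : ℕ) : ℕ :=
  (((Finset.Icc i n).filter fun l => Astar n a i l = epsStar n a i).max).unbotD 0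

/-- The operator `f̃_i^*`: increase `a_{i,l_f+1}` by 1 and decrease `a_{i+1,l_f+1}` by 1
(the latter discarded when `l_f = i`, the entry `(i+1,i+1)` being out of range). -/
def ftilStar (n : ℕ) (a : ℤ → ℤ → ℤ) (i : ℕ) : ℤ → ℤ → ℤ := fun k l =>
  if k = (i : ℤ) ∧ l = (lfStar n a i : ℤ) + 1 then a k l + 1
  else if k = (i : ℤ) + 1 ∧ l = (lfStar n a i : ℤ) + 1 ∧ (i : ℤ) < (lfStar n a i : ℤ) then
    a k l - 1
  else a k l

/-- The operator `ẽ_i^*` (for `ε_i^*(a) > 0`): decrease `a_{i,l_e+1}` by 1 and increase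
`a_{i+1,l_e+1}` by 1 (the latter discarded when `l_e = i`). -/
def etilStar (n : ℕ) (a : ℤ → ℤ → ℤ) (i : ℕ) : ℤ → ℤ → ℤ := fun k l =>
  if k = (i : ℤ) ∧ l = (leStar n a i : ℤ) + 1 then a k l - 1
  else if k = (i : ℤ) + 1 ∧ l = (leStar n a i : ℤ) + 1 ∧ (i : ℤ) < (leStar n a i : ℤ) then
    a k l + 1
  else a k l


theorem kth_eq (K : Finset ℕ) (p : ℕ) (h1 : 1 ≤ p) (h2 : p ≤ K.card) :
    kth K p = K.orderEmbOfFin rfl ⟨p - 1, by omega⟩ := by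
  unfold kth
  rw [Finset.orderEmbOfFin_apply]
  rw [List.getD_eq_getElem _ _ (by rw [Finset.length_sort]; omega)]
  rfl

theorem kth_mem (K : Finset ℕ) (p : ℕ) (h1 : 1 ≤ p) (h2 : p ≤ K.card) : kth K p ∈ K := by
  rw [kth_eq K p h1 h2]
  exact Finset.orderEmbOfFin_mem _ _ _

theorem kth_lt (K : Finset ℕ) (p q : ℕ) (h1 : 1 ≤ p) (hpq : p < q) (h2 : q ≤ K.card) :
    kth K p < kth K q := by
  rw [kth_eq K p h1 (by omega), kth_eq K q (by omega) h2]
  apply (K.orderEmbOfFin rfl).strictMono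
  simp only [Fin.mk_lt_mk]
  omega

theorem kth_surj (K : Finset ℕ) (x : ℕ) (hx : x ∈ K) :
    ∃ p, 1 ≤ p ∧ p ≤ K.card ∧ kth K p = x := by
  have : x ∈ Set.range (K.orderEmbOfFin rfl) := by
    rw [Finset.range_orderEmbOfFin]; exact hx
  obtain ⟨⟨j, hj⟩, rfl⟩ := this
  refine ⟨j + 1, by omega, by omega, ?_⟩
  rw [kth_eq K (j + 1) (by omega) (by omega)]
  rfl

theorem kth_add_le (K : Finset ℕ) (p d : ℕ) (h1 : 1 ≤ p) (h2 : p + d ≤ K.card) :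
    kth K p + d ≤ kth K (p + d) := by
  induction d with
  | zero => simp
  | succ d ih =>
    have := ih (by omega)
    have := kth_lt K (p + d) (p + (d + 1)) (by omega) (by omega) h2
    omega

theorem row_mono {K : Finset ℕ} {c : ℕ → ℕ → ℤ} (hc : IsKTab K c) (p q d : ℕ)
    (h1 : 1 ≤ p) (h2 : p ≤ q) (h3 : q + d ≤ K.card) : c p q ≤ c p (q + d) := by
  induction d with
  | zero => simp
  | succ d ih =>
    exact (ih (by omega)).trans (hc.2.1 p (q + d) h1 (by omega) (by omega))

theorem row_mono' {K : Finset ℕ} {c : ℕ → ℕ → ℤ} (hc : IsKTab K c) (p q q' : ℕ)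
    (h1 : 1 ≤ p) (h2 : p ≤ q) (h : q ≤ q') (h3 : q' ≤ K.card) : c p q ≤ c p q' := by
  have := row_mono hc p q (q' - q) h1 h2 (by omega)
  rwa [show q + (q' - q) = q' by omega] at this

theorem col_mono {K : Finset ℕ} {c : ℕ → ℕ → ℤ} (hc : IsKTab K c) (p d q : ℕ)
    (h1 : 1 ≤ p) (h2 : p + d ≤ q) (h3 : q ≤ K.card) : c p q + d ≤ c (p + d) q := by
  induction d with
  | zero => simp
  | succ d ih =>
    have h := ih (by omega)
    have h' := hc.2.2 (p + d) q (by omega) (by omega) h3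
    push_cast
    have : p + (d + 1) = p + d + 1 := by omega
    rw [this]
    omega

theorem diag_lt {K : Finset ℕ} {c : ℕ → ℕ → ℤ} (hc : IsKTab K c) (p p' d : ℕ)
    (h1 : 1 ≤ p) (h2 : p < p') (h3 : p' + d ≤ K.card) : c p (p + d) < c p' (p' + d) := by
  have h := row_mono' hc p (p + d) (p' + d) h1 (by omega) (by omega) h3
  have h' := col_mono hc p (p' - p) (p' + d) h1 (by omega) h3
  rw [show p + (p' - p) = p' by omega] at h'
  omega

theorem diag_inj {K : Finset ℕ} {c : ℕ → ℕ → ℤ} (hc : IsKTab K c) (p p' d : ℕ)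
    (h1 : 1 ≤ p) (h1' : 1 ≤ p') (h2 : p + d ≤ K.card) (h3 : p' + d ≤ K.card)
    (h : c p (p + d) = c p' (p' + d)) : p = p' := by
  rcases lt_trichotomy p p' with h' | h' | h'
  · have := diag_lt hc p p' d h1 h' h3; omega
  · exact h'
  · have := diag_lt hc p' p d h1' h' h2; omega

/-- the diagonal at distance `d` contains the value `x` -/
def HasD (K : Finset ℕ) (c : ℕ → ℕ → ℤ) (x : ℤ) (d : ℕ) : Prop :=
  ∃ p, 1 ≤ p ∧ p + d ≤ K.card ∧ c p (p + d) = x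

theorem exists_tab (K : Finset ℕ) : ∃ c, IsKTab K c := by
  refine ⟨fun p _ => (kth K p : ℤ), fun p _ _ => rfl, fun p q _ _ _ => le_rfl, ?_⟩
  intro p q h1 h2 h3
  have h := kth_lt K p (p + 1) h1 (by omega) (by omega)
  show (kth K p : ℤ) < (kth K (p + 1) : ℤ)
  omega

theorem hasD_zero {K : Finset ℕ} {c : ℕ → ℕ → ℤ} (hc : IsKTab K c) (x : ℕ) :
    HasD K c x 0 ↔ x ∈ K := by
  constructor
  · rintro ⟨p, h1, h2, h3⟩
    rw [add_zero, hc.1 p h1 h2] at h3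
    have : kth K p = x := by exact_mod_cast h3
    rw [← this]; exact kth_mem K p h1 h2
  · intro hx
    obtain ⟨p, h1, h2, h3⟩ := kth_surj K x hx
    exact ⟨p, h1, h2, by rw [add_zero, hc.1 p h1 h2, h3]⟩

open Classical in
theorem count_eq {K : Finset ℕ} {c : ℕ → ℕ → ℤ} (hc : IsKTab K c) (x : ℤ) (d : ℕ) (hd : 1 ≤ d) :
    (∑ p ∈ Finset.Icc 1 K.card, ∑ q ∈ Finset.Icc (p + 1) K.card,
      if c p q = x ∧ q = p + d then (1 : ℤ) else 0) = if HasD K c x d then 1 else 0 := by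
  split_ifs with h
  · obtain ⟨p, h1, h2, h3⟩ := h
    rw [Finset.sum_eq_single p, Finset.sum_eq_single (p + d)]
    · simp [h3]
    · intro q _ hq; rw [if_neg]; tauto
    · intro hq; exfalso; apply hq; rw [Finset.mem_Icc]; omega
    · intro p' hp' hne
      apply Finset.sum_eq_zero
      intro q hq
      rw [if_neg]
      rintro ⟨e1, rfl⟩
      rw [Finset.mem_Icc] at hp' hq
      exact hne (diag_inj hc p' p d hp'.1 h1 hq.2 h2 (by rw [e1, h3]))
    · intro hq; exfalso; apply hq; rw [Finset.mem_Icc]; omega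
  · apply Finset.sum_eq_zero
    intro p hp
    apply Finset.sum_eq_zero
    intro q hq
    rw [if_neg]
    rintro ⟨e1, rfl⟩
    rw [Finset.mem_Icc] at hp hq
    exact h ⟨p, hp.1, hq.2, e1⟩

open Classical in
theorem tabSum_etil (n : ℕ) (a : ℤ → ℤ → ℤ) (i : ℕ) (hL : i ≤ leStar n a i) (K : Finset ℕ)
    (c : ℕ → ℕ → ℤ) (hc : IsKTab K c) :
    tabSum (etilStar n a i) K c + (if leStar n a i = i ∧ i + 1 ∈ K then 1 else 0) =
      tabSum a K c - (if HasD K c i (leStar n a i - i + 1) then 1 else 0)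
        + (if HasD K c ((i : ℤ) + 1) (leStar n a i - i) then 1 else 0) := by
  obtain ⟨m, hm⟩ : ∃ m, leStar n a i = i + m := ⟨leStar n a i - i, by omega⟩
  have key : tabSum (etilStar n a i) K c = tabSum a K c
      - (∑ p ∈ Finset.Icc 1 K.card, ∑ q ∈ Finset.Icc (p + 1) K.card,
          if c p q = i ∧ q = p + (m + 1) then (1 : ℤ) else 0)
      + (∑ p ∈ Finset.Icc 1 K.card, ∑ q ∈ Finset.Icc (p + 1) K.card,
          if c p q = (i : ℤ) + 1 ∧ q = p + m then (1 : ℤ) else 0) := by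
    unfold tabSum
    simp only [← Finset.sum_sub_distrib, ← Finset.sum_add_distrib]
    apply Finset.sum_congr rfl
    intro p hp
    apply Finset.sum_congr rfl
    intro q hq
    rw [Finset.mem_Icc] at hp hq
    unfold etilStar
    rw [hm]
    push_cast
    split_ifs <;> omega
  rw [key, count_eq hc _ _ (by omega), hm, show i + m - i = m by omega]
  rcases Nat.eq_zero_or_pos m with rfl | hpos
  · have h0 : (∑ p ∈ Finset.Icc 1 K.card, ∑ q ∈ Finset.Icc (p + 1) K.card,
          if c p q = (i : ℤ) + 1 ∧ q = p + 0 then (1 : ℤ) else 0) = 0 := by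
      apply Finset.sum_eq_zero
      intro p hp
      apply Finset.sum_eq_zero
      intro q hq
      rw [Finset.mem_Icc] at hq
      rw [if_neg]
      omega
    rw [h0]
    have := hasD_zero hc (i + 1)
    push_cast at this
    simp only [this, add_zero, true_and, zero_add]
  · rw [count_eq hc _ _ hpos]
    rw [if_neg (c := i + m = i ∧ i + 1 ∈ K) (by omega)]
    ring

theorem first_etil (n : ℕ) (a : ℤ → ℤ → ℤ) (i : ℕ) (hi : 1 ≤ i) (hL : i ≤ leStar n a i)
    (K : Finset ℕ) :
    (∑ k ∈ K, ∑ s ∈ Finset.Icc 1 (k - 1), etilStar n a i (s : ℤ) (k : ℤ)) =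
      (∑ k ∈ K, ∑ s ∈ Finset.Icc 1 (k - 1), a (s : ℤ) (k : ℤ))
        - (if leStar n a i = i ∧ i + 1 ∈ K then 1 else 0) := by
  generalize hLL : leStar n a i = L at *
  have inner : ∀ k ∈ K, (∑ s ∈ Finset.Icc 1 (k - 1), etilStar n a i (s : ℤ) (k : ℤ)) =
      (∑ s ∈ Finset.Icc 1 (k - 1), a (s : ℤ) (k : ℤ)) -
        (if k = i + 1 then (if L = i then 1 else 0) else 0) := by
    intro k _
    have e1 : ∀ s ∈ Finset.Icc 1 (k - 1), etilStar n a i (s : ℤ) (k : ℤ) = a (s : ℤ) (k : ℤ)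
        - (if s = i then (if k = L + 1 then 1 else 0) else 0)
        + (if s = i + 1 then (if k = L + 1 ∧ i < L then 1 else 0) else 0) := by
      intro s _
      unfold etilStar
      rw [hLL]
      split_ifs <;> omega
    rw [Finset.sum_congr rfl e1, Finset.sum_add_distrib, Finset.sum_sub_distrib,
      Finset.sum_ite_eq', Finset.sum_ite_eq']
    simp only [Finset.mem_Icc]
    split_ifs <;> omega
  rw [Finset.sum_congr rfl inner, Finset.sum_sub_distrib, Finset.sum_ite_eq']
  congr 1
  split_ifs <;> simp_all

theorem Astar_sub (n : ℕ) (a : ℤ → ℤ → ℤ) (i l k : ℕ) (h : l + k ≤ n + 1) :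
    Astar n a i l = Astar n a i (l + k) + ∑ j ∈ Finset.range k,
      (a (i : ℤ) ((l : ℤ) + 1 + j) - a ((i : ℤ) + 1) ((l : ℤ) + 1 + j + 1)) := by
  induction k with
  | zero => simp
  | succ k ih =>
    rw [ih (by omega), Finset.sum_range_succ]
    have : Astar n a i (l + k) = Astar n a i (l + (k + 1)) +
        (a (i : ℤ) ((l : ℤ) + 1 + k) - a ((i : ℤ) + 1) ((l : ℤ) + 1 + k + 1)) := by
      unfold Astar
      rw [← Finset.insert_Icc_add_one_left_eq_Icc (a := l + k + 1) (by omega),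
        Finset.sum_insert (by simp)]
      push_cast
      rw [show (l : ℤ) + k + 1 = (l : ℤ) + 1 + k by ring]
      rw [show l + (k + 1) + 1 = l + k + 1 + 1 by ring]
      ring
    rw [this]; ring

theorem le_facts (n : ℕ) (a : ℤ → ℤ → ℤ) (i : ℕ) (hi : i ≤ n) (hpos : 0 < epsStar n a i) :
    i ≤ leStar n a i ∧ leStar n a i ≤ n ∧
    (∀ l, i ≤ l → l ≤ n → Astar n a i l ≤ Astar n a i (leStar n a i)) ∧
    (∀ l, leStar n a i < l → l ≤ n + 1 → Astar n a i l < Astar n a i (leStar n a i)) := by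
  have hne : ((Finset.Icc i n).image (Astar n a i)).Nonempty :=
    (Finset.nonempty_Icc.2 hi).image _
  obtain ⟨e, he⟩ := Finset.max_of_nonempty hne
  have hee : epsStar n a i = e := by unfold epsStar; rw [he]; rfl
  have hmem := Finset.mem_of_max he
  obtain ⟨l0, hl0, hl0e⟩ := Finset.mem_image.1 hmem
  have hne2 : ((Finset.Icc i n).filter fun l => Astar n a i l = epsStar n a i).Nonempty :=
    ⟨l0, by rw [Finset.mem_filter]; exact ⟨hl0, by rw [hl0e, hee]⟩⟩
  obtain ⟨L, hLm⟩ := Finset.max_of_nonempty hne2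
  have hL : leStar n a i = L := by unfold leStar; rw [hLm]; rfl
  have hLmem := Finset.mem_of_max hLm
  rw [Finset.mem_filter, Finset.mem_Icc] at hLmem
  rw [hL]
  have hle : ∀ l, i ≤ l → l ≤ n → Astar n a i l ≤ Astar n a i L := by
    intro l h1 h2
    rw [hLmem.2, hee]
    exact Finset.le_max_of_eq (Finset.mem_image_of_mem _ (Finset.mem_Icc.2 ⟨h1, h2⟩)) he
  refine ⟨hLmem.1.1, hLmem.1.2, hle, ?_⟩
  intro l h1 h2
  rcases Nat.lt_or_ge n l with h | h
  · have : l = n + 1 := by omega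
    subst this
    rw [hLmem.2]
    have : Astar n a i (n + 1) = 0 := by unfold Astar; simp
    omega
  · refine lt_of_le_of_ne (hle l (by omega) h) ?_
    intro heq
    have : l ≤ L := Finset.le_max_of_eq (by
      rw [Finset.mem_filter, Finset.mem_Icc]
      exact ⟨⟨by omega, h⟩, by rw [heq, hLmem.2]⟩) hLm
    omega

/-- Replace `k` entries of row `p` starting at column `q0` by `y`. -/
def modRow (c : ℕ → ℕ → ℤ) (p0 q0 k : ℕ) (y : ℤ) : ℕ → ℕ → ℤ := fun p q =>
  if p = p0 ∧ q0 ≤ q ∧ q < q0 + k then y else c p q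

theorem tabSum_modRow (a : ℤ → ℤ → ℤ) (K : Finset ℕ) (c : ℕ → ℕ → ℤ) (p0 q0 k : ℕ) (x y : ℤ)
    (h1 : 1 ≤ p0) (h2 : p0 < q0) (hk : 1 ≤ k) (h3 : q0 + k ≤ K.card + 1)
    (hx : ∀ q, q0 ≤ q → q < q0 + k → c p0 q = x) :
    tabSum a K (modRow c p0 q0 k y) = tabSum a K c + ∑ j ∈ Finset.range k,
      (a y (y + ((q0 : ℤ) - p0 + j)) - a x (x + ((q0 : ℤ) - p0 + j))) := by
  rw [← sub_eq_iff_eq_add']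
  unfold tabSum
  simp only [← Finset.sum_sub_distrib]
  rw [Finset.sum_eq_single p0]
  · have hsub : Finset.Ico q0 (q0 + k) ⊆ Finset.Icc (p0 + 1) K.card := by
      intro q hq
      rw [Finset.mem_Ico] at hq
      rw [Finset.mem_Icc]; omega
    rw [← Finset.sum_subset hsub]
    · rw [Finset.sum_Ico_eq_sum_range, Nat.add_sub_cancel_left]
      apply Finset.sum_congr rfl
      intro j hj
      rw [Finset.mem_range] at hj
      rw [hx (q0 + j) (by omega) (by omega)]
      unfold modRow
      rw [if_pos ⟨rfl, by omega, by omega⟩]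
      push_cast
      rw [show (q0 : ℤ) + j - p0 = (q0 : ℤ) - p0 + j by ring]
    · intro q _ hq
      rw [Finset.mem_Ico] at hq
      unfold modRow
      rw [if_neg (by tauto), sub_self]
  · intro p _ hp
    apply Finset.sum_eq_zero
    intro q _
    unfold modRow
    rw [if_neg (by tauto), sub_self]
  · intro h; exfalso; apply h; rw [Finset.mem_Icc]; omega

/-- Raising case: `i+1` occurs on diagonal `m`, `i` does not occur on diagonal `m+1`. -/
theorem case_up (n : ℕ) (a : ℤ → ℤ → ℤ) (i m : ℕ) (hm : i + m ≤ n)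
    (hmax : ∀ l, i ≤ l → l ≤ n → Astar n a i l ≤ Astar n a i (i + m))
    (K : Finset ℕ) (hK : i ∈ K ∨ i + 1 ∉ K) (c : ℕ → ℕ → ℤ) (hc : IsKTab K c)
    (hP : ¬ HasD K c i (m + 1)) (hQ : HasD K c ((i : ℤ) + 1) m) :
    ∃ c', IsKTab K c' ∧ tabSum a K c' ≤ tabSum a K c ∧ ¬ HasD K c' ((i : ℤ) + 1) m := by
  obtain ⟨p, hp1, hpm, hpc⟩ := hQ
  have hprev : ∀ p', p = p' + 1 → 1 ≤ p' → ∀ q, p' ≤ q → q ≤ p + m → c p' q < i := by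
    intro p' hp' h1 q hq1 hq2
    have e1 := row_mono' hc p' q (p + m) h1 hq1 hq2 hpm
    have e2 := hc.2.2 p' (p + m) h1 (by omega) hpm
    rw [← hp', hpc] at e2
    have e3 : c p' (p + m) ≠ i := by
      intro h
      exact hP ⟨p', h1, by omega, by rw [← h]; congr 1; omega⟩
    omega
  have hpp : c p p ≠ (i : ℤ) + 1 := by
    intro h
    rw [hc.1 p hp1 (by omega)] at h
    have h' : kth K p = i + 1 := by exact_mod_cast h
    have hiK : i ∈ K := by
      rcases hK with hK | hK
      · exact hK
      · exact absurd (h' ▸ kth_mem K p hp1 (by omega)) hK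
    obtain ⟨p', g1, g2, g3⟩ := kth_surj K i hiK
    have hlt : p' < p := by
      rcases lt_trichotomy p' p with h | h | h
      · exact h
      · subst h; omega
      · have := kth_lt K p p' hp1 h g2; omega
    have e := kth_add_le K p' (p - 1 - p') g1 (by omega)
    rw [show p' + (p - 1 - p') = p - 1 by omega] at e
    have e2 := hprev (p - 1) (by omega) (by omega) (p - 1) le_rfl (by omega)
    rw [hc.1 (p - 1) (by omega) (by omega)] at e2
    omega
  classical
  have hex : ∃ s, c p (p + s) = (i : ℤ) + 1 := ⟨m, hpc⟩
  obtain ⟨s, hs, hsmin⟩ : ∃ s, c p (p + s) = (i : ℤ) + 1 ∧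
      ∀ t < s, c p (p + t) ≠ (i : ℤ) + 1 :=
    ⟨Nat.find hex, Nat.find_spec hex, fun t ht => Nat.find_min hex ht⟩
  have hsm : s ≤ m := by
    by_contra h
    exact hsmin m (by omega) hpc
  have hs1 : 1 ≤ s := by
    rcases Nat.eq_zero_or_pos s with rfl | h
    · exact absurd hs hpp
    · exact h
  have hconst : ∀ q, p + s ≤ q → q < p + s + (m + 1 - s) → c p q = (i : ℤ) + 1 := by
    intro q h1 h2
    have e1 := row_mono' hc p (p + s) q hp1 (by omega) h1 (by omega)
    have e2 := row_mono' hc p q (p + m) hp1 (by omega) (by omega) hpm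
    omega
  refine ⟨modRow c p (p + s) (m + 1 - s) i, ?_, ?_, ?_⟩
  · refine ⟨?_, ?_, ?_⟩
    · intro p' h1 h2
      unfold modRow
      rw [if_neg (by omega)]
      exact hc.1 p' h1 h2
    · intro p' q h1 h2 h3
      have e := hc.2.1 p' q h1 h2 h3
      unfold modRow
      by_cases hpp' : p' = p
      · subst hpp'
        by_cases hA : p' + s ≤ q + 1 ∧ q + 1 < p' + s + (m + 1 - s)
        · rw [if_pos (c := p' = p' ∧ p' + s ≤ q + 1 ∧ _) ⟨rfl, hA⟩]
          split_ifs with hB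
          · exact le_rfl
          · have e1 := hconst (q + 1) hA.1 hA.2
            have e2 := hsmin (q - p') (by omega)
            rw [show p' + (q - p') = q by omega] at e2
            omega
        · rw [if_neg (c := p' = p' ∧ p' + s ≤ q + 1 ∧ _) (by tauto)]
          split_ifs with hB
          · have e1 := hconst q hB.2.1 hB.2.2
            omega
          · exact e
      · rw [if_neg (by tauto), if_neg (by tauto)]
        exact e
    · intro p' q h1 h2 h3
      have e := hc.2.2 p' q h1 h2 h3
      unfold modRow
      split_ifs with hA hB hB
      · omega
      · have e1 := hconst q hA.2.1 hA.2.2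
        rw [hA.1] at e ⊢
        omega
      · exact hprev p' hB.1.symm h1 q (by omega) (by omega)
      · exact e
  · rw [tabSum_modRow a K c p (p + s) (m + 1 - s) ((i : ℤ) + 1) i hp1 (by omega) (by omega)
      (by omega) hconst]
    have e := Astar_sub n a i (i + s - 1) (m + 1 - s) (by omega)
    rw [show i + s - 1 + (m + 1 - s) = i + m by omega] at e
    have e2 := hmax (i + s - 1) (by omega) (by omega)
    have e3 : ∑ j ∈ Finset.range (m + 1 - s),
        (a (i : ℤ) ((i : ℤ) + (((p + s : ℕ) : ℤ) - p + j))
          - a ((i : ℤ) + 1) ((i : ℤ) + 1 + (((p + s : ℕ) : ℤ) - p + j))) =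
        ∑ j ∈ Finset.range (m + 1 - s), (a (i : ℤ) (((i + s - 1 : ℕ) : ℤ) + 1 + j)
          - a ((i : ℤ) + 1) (((i + s - 1 : ℕ) : ℤ) + 1 + j + 1)) := by
      apply Finset.sum_congr rfl
      intro j _
      congr 2 <;> omega
    rw [e3]
    omega
  · rintro ⟨p', h1, h2, h3⟩
    unfold modRow at h3
    by_cases hpp' : p' = p
    · subst hpp'
      rw [if_pos (by omega)] at h3
      omega
    · rw [if_neg (by tauto)] at h3
      exact hpp' (diag_inj hc p' p m h1 hp1 h2 hpm (by rw [h3, hpc]))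

/-- Lowering case: `i` occurs on diagonal `m+1`, `i+1` does not occur on diagonal `m`. -/
theorem case_down (n : ℕ) (a : ℤ → ℤ → ℤ) (i m : ℕ)
    (hmax : ∀ l, i + m < l → l ≤ n + 1 → Astar n a i l < Astar n a i (i + m))
    (K : Finset ℕ) (hKn : K ⊆ Finset.Icc 1 (n + 1)) (c : ℕ → ℕ → ℤ) (hc : IsKTab K c)
    (hP : HasD K c i (m + 1)) (hQ : ¬ HasD K c ((i : ℤ) + 1) m) :
    ∃ c', IsKTab K c' ∧ tabSum a K c' < tabSum a K c := by
  obtain ⟨p, hp1, hpm, hpc⟩ := hP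
  have hnext : ∀ q, p + (m + 1) ≤ q → q ≤ K.card → (i : ℤ) + 1 < c (p + 1) q := by
    intro q hq1 hq2
    have e1 := row_mono' hc (p + 1) (p + (m + 1)) q (by omega) (by omega) hq1 hq2
    have e2 := hc.2.2 p (p + (m + 1)) hp1 (by omega) hpm
    have e3 : c (p + 1) (p + (m + 1)) ≠ (i : ℤ) + 1 := by
      intro h
      exact hQ ⟨p + 1, by omega, by omega, by rw [← h]; congr 1; omega⟩
    omega
  classical
  -- length of the constant run
  have hex : ∃ k, K.card < p + (m + 1) + k ∨ c p (p + (m + 1) + k) ≠ i :=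
    ⟨K.card, Or.inl (by omega)⟩
  obtain ⟨k, hk, hkmin⟩ : ∃ k, (K.card < p + (m + 1) + k ∨ c p (p + (m + 1) + k) ≠ i) ∧
      ∀ t < k, ¬ (K.card < p + (m + 1) + t ∨ c p (p + (m + 1) + t) ≠ i) :=
    ⟨Nat.find hex, Nat.find_spec hex, fun t ht => Nat.find_min hex ht⟩
  have hk1 : 1 ≤ k := by
    rcases Nat.eq_zero_or_pos k with rfl | h
    · rcases hk with hk | hk
      · omega
      · exact absurd hpc hk
    · exact h
  have hkc : p + (m + 1) + (k - 1) ≤ K.card := by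
    have := hkmin (k - 1) (by omega)
    push Not at this
    exact this.1
  have hconst : ∀ q, p + (m + 1) ≤ q → q < p + (m + 1) + k → c p q = i := by
    intro q h1 h2
    have := hkmin (q - (p + (m + 1))) (by omega)
    push Not at this
    rw [show p + (m + 1) + (q - (p + (m + 1))) = q by omega] at this
    exact this.2
  have hbound : i + m + k ≤ n + 1 := by
    have e1 := hconst (p + (m + 1) + (k - 1)) (by omega) (by omega)
    have e2 := col_mono hc p (m + 1 + (k - 1)) (p + (m + 1) + (k - 1)) hp1 (by omega) hkc
    rw [show p + (m + 1 + (k - 1)) = p + (m + 1) + (k - 1) by omega,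
      hc.1 _ (by omega) hkc, e1] at e2
    have e3 := hKn (kth_mem K (p + (m + 1) + (k - 1)) (by omega) hkc)
    rw [Finset.mem_Icc] at e3
    omega
  refine ⟨modRow c p (p + (m + 1)) k ((i : ℤ) + 1), ?_, ?_⟩
  · refine ⟨?_, ?_, ?_⟩
    · intro p' h1 h2
      unfold modRow
      rw [if_neg (by omega)]
      exact hc.1 p' h1 h2
    · intro p' q h1 h2 h3
      have e := hc.2.1 p' q h1 h2 h3
      unfold modRow
      split_ifs with hA hB hB
      · exact le_rfl
      · have hq : q + 1 = p + (m + 1) + k := by omega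
        have e1 := hconst q hA.2.1 hA.2.2
        rw [hA.1] at e ⊢
        rcases hk with hk | hk
        · omega
        · rw [← hq] at hk
          omega
      · have e1 := hconst (q + 1) hB.2.1 hB.2.2
        rw [hB.1] at e ⊢
        omega
      · exact e
    · intro p' q h1 h2 h3
      have e := hc.2.2 p' q h1 h2 h3
      unfold modRow
      split_ifs with hA hB hB
      · omega
      · rw [hA.1]
        exact hnext q hA.2.1 h3
      · have e1 := hconst q hB.2.1 hB.2.2
        rw [hB.1] at e
        omega
      · exact e
  · rw [tabSum_modRow a K c p (p + (m + 1)) k i ((i : ℤ) + 1) hp1 (by omega) hk1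
      (by omega) hconst]
    have e := Astar_sub n a i (i + m) k (by omega)
    have e2 := hmax (i + m + k) (by omega) (by omega)
    have e3 : ∑ j ∈ Finset.range k,
        (a ((i : ℤ) + 1) ((i : ℤ) + 1 + (((p + (m + 1) : ℕ) : ℤ) - p + j))
          - a (i : ℤ) ((i : ℤ) + (((p + (m + 1) : ℕ) : ℤ) - p + j))) =
        - ∑ j ∈ Finset.range k, (a (i : ℤ) (((i + m : ℕ) : ℤ) + 1 + j)
          - a ((i : ℤ) + 1) (((i + m : ℕ) : ℤ) + 1 + j + 1)) := by
      rw [← Finset.sum_neg_distrib]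
      apply Finset.sum_congr rfl
      intro j _
      rw [neg_sub]
      congr 2 <;> omega
    rw [e3]
    omega

theorem tabSum_nonneg (n : ℕ) (a : ℤ → ℤ → ℤ) (ha : IsLusztig n a) (K : Finset ℕ)
    (c : ℕ → ℕ → ℤ) : 0 ≤ tabSum a K c :=
  Finset.sum_nonneg fun _ _ => Finset.sum_nonneg fun _ _ => ha.1 _ _

/-- for every Lusztig datum `a` and `1 ≤ i ≤ n` with `ε_i^*(a) > 0`:
`M_K(ẽ_i^* a) = M_K(a)` for every `K ∈ M_n^×` with `i ∈ K` or `i+1 ∉ K`, and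
`M_{[i+1,n+1]}(ẽ_i^* a) = M_{[i+1,n+1]}(a) + 1`.  (Hence `Ψ` intertwines `ẽ_i^*` on `ℬ`
with the raising Kashiwara operator on `e`-BZ data.) -/
theorem stmt15 (n : ℕ) (hn : 1 ≤ n) (a : ℤ → ℤ → ℤ) (ha : IsLusztig n a)
    (i : ℕ) (hi1 : 1 ≤ i) (hi2 : i ≤ n) (hpos : 0 < epsStar n a i) :
    (∀ K : Finset ℕ, K ⊆ Finset.Icc 1 (n + 1) → K ≠ ∅ → K ≠ Finset.Icc 1 (n + 1) →
      (i ∈ K ∨ i + 1 ∉ K) → MK n (etilStar n a i) K = MK n a K) ∧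
    MK n (etilStar n a i) (Finset.Icc (i + 1) (n + 1)) =
      MK n a (Finset.Icc (i + 1) (n + 1)) + 1 := by
  obtain ⟨hL1, hL2, hmax, hmax'⟩ := le_facts n a i hi2 hpos
  obtain ⟨m, hm⟩ : ∃ m, leStar n a i = i + m := ⟨leStar n a i - i, by omega⟩
  classical
  have bdd : ∀ K : Finset ℕ,
      BddBelow {z : ℤ | ∃ c : ℕ → ℕ → ℤ, IsKTab K c ∧ z = tabSum a K c} := by
    rintro K
    refine ⟨0, ?_⟩
    rintro z ⟨c, _, rfl⟩
    exact tabSum_nonneg n a ha K c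
  have bdd' : ∀ K : Finset ℕ,
      BddBelow {z : ℤ | ∃ c : ℕ → ℕ → ℤ, IsKTab K c ∧ z = tabSum (etilStar n a i) K c} := by
    rintro K
    refine ⟨-2, ?_⟩
    rintro z ⟨c, hc, rfl⟩
    have e := tabSum_etil n a i hL1 K c hc
    have e' := tabSum_nonneg n a ha K c
    split_ifs at e <;> omega
  have ne : ∀ (x : ℤ → ℤ → ℤ) (K : Finset ℕ),
      {z : ℤ | ∃ c : ℕ → ℕ → ℤ, IsKTab K c ∧ z = tabSum x K c}.Nonempty := by
    intro x K
    obtain ⟨c, hc⟩ := exists_tab K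
    exact ⟨_, c, hc, rfl⟩
  refine ⟨?_, ?_⟩
  · intro K hK1 hK2 hK3 hK
    unfold MK
    rw [if_neg (by tauto), if_neg (by tauto), first_etil n a i hi1 hL1 K]
    have rel := tabSum_etil n a i hL1 K
    generalize (if leStar n a i = i ∧ i + 1 ∈ K then (1 : ℤ) else 0) = E at *
    rw [hm] at rel hmax hmax'
    rw [show i + m - i = m by omega] at rel
    suffices h : sInf {z : ℤ | ∃ c : ℕ → ℕ → ℤ, IsKTab K c ∧ z = tabSum (etilStar n a i) K c} + E
        = sInf {z : ℤ | ∃ c : ℕ → ℕ → ℤ, IsKTab K c ∧ z = tabSum a K c} by omega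
    apply le_antisymm
    · obtain ⟨c, hc, hz⟩ := Int.csInf_mem (ne a K) (bdd K)
      obtain ⟨c', hc', h1, h2⟩ : ∃ c', IsKTab K c' ∧ tabSum a K c' ≤ tabSum a K c ∧
          (HasD K c' ((i : ℤ) + 1) m → HasD K c' i (m + 1)) := by
        by_cases hP : HasD K c i (m + 1)
        · exact ⟨c, hc, le_rfl, fun _ => hP⟩
        · by_cases hQ : HasD K c ((i : ℤ) + 1) m
          · obtain ⟨c', g1, g2, g3⟩ := case_up n a i m (by omega) hmax K hK c hc hP hQ
            exact ⟨c', g1, g2, fun h => absurd h g3⟩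
          · exact ⟨c, hc, le_rfl, fun h => absurd h hQ⟩
      have e := csInf_le (bdd' K) ⟨c', hc', rfl⟩
      have e' := rel c' hc'
      rw [hz]
      split_ifs at e' <;> first | omega | (exfalso; tauto)
    · obtain ⟨c, hc, hz⟩ := Int.csInf_mem (ne (etilStar n a i) K) (bdd' K)
      rw [hz]
      have e' := rel c hc
      have e := csInf_le (bdd K) ⟨c, hc, rfl⟩
      by_cases hP : HasD K c i (m + 1)
      · by_cases hQ : HasD K c ((i : ℤ) + 1) m
        · rw [if_pos hP, if_pos hQ] at e'; omega
        · obtain ⟨c', g1, g2⟩ := case_down n a i m hmax' K hK1 c hc hP hQ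
          have e2 := csInf_le (bdd K) ⟨c', g1, rfl⟩
          rw [if_pos hP, if_neg hQ] at e'; omega
      · rw [if_neg hP] at e'
        split_ifs at e' <;> omega
  · have hcard : (Finset.Icc (i + 1) (n + 1)).card = n + 1 - i := by
      rw [Nat.card_Icc]; omega
    have hne1 : Finset.Icc (i + 1) (n + 1) ≠ ∅ := by
      rw [← Finset.nonempty_iff_ne_empty, Finset.nonempty_Icc]; omega
    have hne2 : Finset.Icc (i + 1) (n + 1) ≠ Finset.Icc 1 (n + 1) := by
      intro h
      have : (1 : ℕ) ∈ Finset.Icc 1 (n + 1) := by rw [Finset.mem_Icc]; omega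
      rw [← h, Finset.mem_Icc] at this
      omega
    have hmemK : ∀ x ∈ Finset.Icc (i + 1) (n + 1), i + 1 ≤ x ∧ x ≤ n + 1 := by
      intro x hx; exact Finset.mem_Icc.1 hx
    generalize Finset.Icc (i + 1) (n + 1) = K at *
    unfold MK
    rw [if_neg (by tauto), if_neg (by tauto), first_etil n a i hi1 hL1 K]
    have rel := tabSum_etil n a i hL1 K
    generalize (if leStar n a i = i ∧ i + 1 ∈ K then (1 : ℤ) else 0) = E at *
    rw [hm] at rel
    rw [show i + m - i = m by omega] at rel
    have rel2 : ∀ c, IsKTab K c → tabSum (etilStar n a i) K c + E = tabSum a K c + 1 := by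
      intro c hc
      have e := rel c hc
      have hP : ¬ HasD K c i (m + 1) := by
        rintro ⟨p, h1, h2, h3⟩
        have e1 := row_mono hc p p (m + 1) h1 le_rfl h2
        rw [hc.1 p h1 (by omega)] at e1
        have e2 := hmemK _ (kth_mem K p h1 (by omega))
        omega
      have hQ : HasD K c ((i : ℤ) + 1) m := by
        refine ⟨1, le_rfl, by omega, ?_⟩
        have e1 := row_mono hc 1 1 m le_rfl le_rfl (by omega)
        rw [hc.1 1 le_rfl (by omega)] at e1
        have e2 := hmemK _ (kth_mem K 1 le_rfl (by omega))
        have e3 := col_mono hc 1 m (1 + m) le_rfl le_rfl (by omega)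
        rw [hc.1 (1 + m) (by omega) (by omega)] at e3
        have e4 := kth_add_le K (1 + m) (n + 1 - i - (1 + m)) (by omega) (by omega)
        have e5 := hmemK _ (kth_mem K (1 + m + (n + 1 - i - (1 + m))) (by omega) (by omega))
        omega
      rw [if_neg hP, if_pos hQ] at e
      omega
    obtain ⟨c, hc, hz⟩ := Int.csInf_mem (ne a K) (bdd K)
    obtain ⟨c', hc', hz'⟩ := Int.csInf_mem (ne (etilStar n a i) K) (bdd' K)
    have e1 := csInf_le (bdd K) ⟨c', hc', rfl⟩
    have e2 := csInf_le (bdd' K) ⟨c, hc, rfl⟩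
    have r1 := rel2 c hc
    have r2 := rel2 c' hc'
    omega
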